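/- arXiv:2509.10485 — 2 statements merged into one kernel-verified Lean document; each statement's English description precedes it below -/
import Mathlib

section
/- Calkin–Wilf enumeration property: the map sending a word w over {L,R} to its Calkin–Wilf value q(w) = (a+b)/(c+d) ∈ ℚ, where M(w) = (a b; c d), is a bijection from the set of all finite words over {L,R} onto the set of positive rational numbers (each positive rational appears exactly once in the Calkin–Wilf enumeration). -/
/-!
Prepending a letter to a word acts on the Calkin–Wilf value by a Möbius map: `qCW (L w)` is
`q / (q + 1)` and `qCW (R w)` is `q + 1`, where `q = qCW w`, and the empty word has value `1`
(`qCW_cons_false`, `qCW_cons_true`, `qCW_nil`). Since values are positive, the first letter of a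
word is read off from its value: the value is `< 1`, `= 1` or `> 1` according to whether the word
starts with `L`, is empty, or starts with `R`. Both Möbius maps are injective, so the whole word is
determined by its value (`qCW_injective`). Conversely, undoing these maps on a fraction `a / b` is
the subtractive Euclidean algorithm, which terminates at `1` and spells out a word with value
`a / b` (`exists_qCW_eq_div`).
-/

/-- The matrix `L = !![1,0;1,1]`. -/
def Lmat : Matrix (Fin 2) (Fin 2) ℤ := !![1, 0; 1, 1]

/-- The matrix `R = !![1,1;0,1]`. -/
def Rmat : Matrix (Fin 2) (Fin 2) ℤ := !![1, 1; 0, 1]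

/-- A word is a finite list over the alphabet {L,R}; we encode L as `false`
and R as `true`.  `wordMatrix w` is the product of the letters in order. -/
def wordMatrix (w : List Bool) : Matrix (Fin 2) (Fin 2) ℤ :=
  (w.map (fun b => if b then Rmat else Lmat)).prod

/-- `wordVal w` is the integer whose binary expansion (MSB first) reads
L as 0 and R as 1. -/
def wordVal (w : List Bool) : ℕ :=
  w.foldl (fun acc b => 2 * acc + (if b then 1 else 0)) 0

/-- Breadth-first (length-lex) rank of a word. -/
def betaRank (w : List Bool) : ℕ := 2 ^ w.length - 1 + wordVal w

/-- First-appearance index of a denominator `d` in the Calkin–Wilf stream. -/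
noncomputable def piCW (d : ℕ) : ℕ :=
  sInf {k : ℕ | ∃ w : List Bool, wordMatrix w 1 0 = (d : ℤ) ∧ betaRank w = k}

/-- Row-start index `i₀(n) = (n−2)(n−1)/2`. -/
def i0 (n : ℕ) : ℕ := (n - 2) * (n - 1) / 2

/-- Calkin–Wilf value of a word `w` with `M(w) = (a b; c d)`:
the rational `q(w) = (a+b)/(c+d)`. -/
def qCW (w : List Bool) : ℚ :=
  ((wordMatrix w 0 0 + wordMatrix w 0 1 : ℤ) : ℚ) /
    ((wordMatrix w 1 0 + wordMatrix w 1 1 : ℤ) : ℚ)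

/-- The numerator and denominator of `qCW w` are the row sums of `wordMatrix w`. -/
lemma rowSum_pos (w : List Bool) :
    0 < wordMatrix w 0 0 + wordMatrix w 0 1 ∧ 0 < wordMatrix w 1 0 + wordMatrix w 1 1 := by
  induction w with
  | nil => simp [wordMatrix]
  | cons b w ih =>
    cases b <;>
      simp only [wordMatrix, List.map_cons, List.prod_cons, Matrix.mul_apply, Fin.sum_univ_two,
        Lmat, Rmat] at ih ⊢ <;>
      simp <;> omega

lemma qCW_pos (w : List Bool) : 0 < qCW w := by
  obtain ⟨h0, h1⟩ := rowSum_pos w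
  exact div_pos (Int.cast_pos.2 h0) (Int.cast_pos.2 h1)

lemma qCW_nil : qCW [] = 1 := by
  simp [qCW, wordMatrix]

lemma qCW_cons_true (w : List Bool) : qCW (true :: w) = qCW w + 1 := by
  have h1 : ((wordMatrix w 1 0 + wordMatrix w 1 1 : ℤ) : ℚ) ≠ 0 :=
    Int.cast_ne_zero.2 (rowSum_pos w).2.ne'
  have e : wordMatrix (true :: w) = Rmat * wordMatrix w := by simp [wordMatrix]
  unfold qCW
  rw [div_add_one h1, e]
  simp only [Matrix.mul_apply, Fin.sum_univ_two, Rmat]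
  simp
  ring

lemma qCW_cons_false (w : List Bool) : qCW (false :: w) = qCW w / (qCW w + 1) := by
  have h1 : ((wordMatrix w 1 0 + wordMatrix w 1 1 : ℤ) : ℚ) ≠ 0 :=
    Int.cast_ne_zero.2 (rowSum_pos w).2.ne'
  have e : wordMatrix (false :: w) = Lmat * wordMatrix w := by simp [wordMatrix]
  unfold qCW
  rw [div_add_one h1, div_div_div_cancel_right₀ h1, e]
  simp only [Matrix.mul_apply, Fin.sum_univ_two, Lmat]
  simp
  ring

lemma one_lt_qCW_cons_true (w : List Bool) : 1 < qCW (true :: w) := by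
  rw [qCW_cons_true]
  linarith [qCW_pos w]

lemma qCW_cons_false_lt_one (w : List Bool) : qCW (false :: w) < 1 := by
  have h := qCW_pos w
  rw [qCW_cons_false, div_lt_one (by linarith)]
  linarith

lemma qCW_injective : Function.Injective qCW := by
  intro v
  induction v with
  | nil =>
    rintro (_ | ⟨_ | _, w⟩) h
    · rfl
    · linarith [qCW_nil, qCW_cons_false_lt_one w]
    · linarith [qCW_nil, one_lt_qCW_cons_true w]
  | cons b v ih =>
    rintro (_ | ⟨c, w⟩) h
    · cases b
      · linarith [qCW_nil, qCW_cons_false_lt_one v]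
      · linarith [qCW_nil, one_lt_qCW_cons_true v]
    · cases b <;> cases c
      · rw [qCW_cons_false, qCW_cons_false] at h
        have hv := qCW_pos v
        have hw := qCW_pos w
        rw [div_eq_div_iff (by linarith) (by linarith)] at h
        rw [ih (show qCW v = qCW w by linarith)]
      · linarith [qCW_cons_false_lt_one v, one_lt_qCW_cons_true w]
      · linarith [one_lt_qCW_cons_true v, qCW_cons_false_lt_one w]
      · rw [qCW_cons_true, qCW_cons_true] at h
        rw [ih (show qCW v = qCW w by linarith)]

/-- The subtractive Euclidean algorithm on `(a, b)` spells out a word with value `a / b`. The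
fraction need not be in lowest terms: the algorithm stops when both entries equal the gcd. -/
lemma exists_qCW_eq_div (a b : ℕ) (ha : 0 < a) (hb : 0 < b) :
    ∃ w : List Bool, qCW w = (a : ℚ) / b := by
  have ha' : (a : ℚ) ≠ 0 := by positivity
  have hb' : (b : ℚ) ≠ 0 := by positivity
  rcases lt_trichotomy a b with h | h | h
  · obtain ⟨w, hw⟩ := exists_qCW_eq_div a (b - a) ha (by omega)
    have hd : ((b - a : ℕ) : ℚ) ≠ 0 := Nat.cast_ne_zero.2 (by omega)
    refine ⟨false :: w, ?_⟩
    rw [qCW_cons_false, hw, div_add_one hd, div_div_div_cancel_right₀ hd, ← Nat.cast_add,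
      Nat.add_sub_cancel' h.le]
  · exact ⟨[], by rw [qCW_nil, h, div_self hb']⟩
  · obtain ⟨w, hw⟩ := exists_qCW_eq_div (a - b) b (by omega) hb
    refine ⟨true :: w, ?_⟩
    rw [qCW_cons_true, hw, div_add_one hb', ← Nat.cast_add, Nat.sub_add_cancel h.le]
termination_by a + b

/-- The Calkin–Wilf map `w ↦ q(w)` is a bijection from the set of all finite
words over {L,R} onto the positive rationals. -/
theorem calkin_wilf_bijection :
    (∀ w : List Bool, 0 < qCW w) ∧
    (∀ r : ℚ, 0 < r → ∃! w : List Bool, qCW w = r) := by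
  refine ⟨qCW_pos, fun r hr => ?_⟩
  have hn : 0 < r.num := Rat.num_pos.2 hr
  obtain ⟨w, hw⟩ := exists_qCW_eq_div r.num.toNat r.den (by omega) r.den_pos
  have hc : ((r.num.toNat : ℕ) : ℚ) = (r.num : ℚ) := by
    exact_mod_cast Int.toNat_of_nonneg hn.le
  rw [hc, Rat.num_div_den] at hw
  exact ⟨w, hw, fun v hv => qCW_injective (hv.trans hw.symm)⟩
end

section
/- Reducedness of Calkin–Wilf fractions: for every word w over {L,R} with M(w) = (a b; c d), one has gcd(a, c) = 1 and gcd(a+b, c+d) = 1; in particular every fraction occurring in the Calkin–Wilf enumeration is in lowest terms, and the denominator of the node associated to w equals c + d. -/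
theorem wordMatrix_cons (x : Bool) (w : List Bool) :
    wordMatrix (x :: w) = (if x then Rmat else Lmat) * wordMatrix w := by
  simp [wordMatrix]

theorem wordMatrix_det (w : List Bool) : (wordMatrix w).det = 1 := by
  induction w with
  | nil => simp [wordMatrix]
  | cons x w ih =>
    rw [wordMatrix_cons, Matrix.det_mul, ih]
    cases x <;> simp [Lmat, Rmat, Matrix.det_fin_two]

theorem wordMatrix_nonneg (w : List Bool) (i j : Fin 2) : 0 ≤ wordMatrix w i j := by
  induction w generalizing i j with
  | nil => fin_cases i <;> fin_cases j <;> simp [wordMatrix]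
  | cons x w ih =>
    rw [wordMatrix_cons, Matrix.mul_apply]
    refine Finset.sum_nonneg fun k _ => mul_nonneg ?_ (ih k j)
    cases x <;> fin_cases i <;> fin_cases k <;> simp [Lmat, Rmat]

/-- Reducedness of Calkin–Wilf fractions: columns of `M(w)` and
the fraction `(a+b)/(c+d)` are in lowest terms, and the denominator of the
node associated to `w` equals `c + d`. -/
theorem calkin_wilf_reduced :
    ∀ w : List Bool,
      Int.gcd (wordMatrix w 0 0) (wordMatrix w 1 0) = 1 ∧
      Int.gcd (wordMatrix w 0 0 + wordMatrix w 0 1)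
        (wordMatrix w 1 0 + wordMatrix w 1 1) = 1 ∧
      ((qCW w).den : ℤ) = wordMatrix w 1 0 + wordMatrix w 1 1 := by
  intro w
  have hdet := wordMatrix_det w
  rw [Matrix.det_fin_two] at hdet
  have hc := wordMatrix_nonneg w 1 0
  have hd := wordMatrix_nonneg w 1 1
  have hpos : 0 < wordMatrix w 1 0 + wordMatrix w 1 1 := by
    by_contra h
    have hc0 : wordMatrix w 1 0 = 0 := by lia
    have hd0 : wordMatrix w 1 1 = 0 := by lia
    simp [hc0, hd0] at hdet
  have hcol : IsCoprime (wordMatrix w 0 0) (wordMatrix w 1 0) :=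
    ⟨wordMatrix w 1 1, -wordMatrix w 0 1, by linear_combination hdet⟩
  have hfrac : IsCoprime (wordMatrix w 0 0 + wordMatrix w 0 1)
      (wordMatrix w 1 0 + wordMatrix w 1 1) :=
    ⟨wordMatrix w 1 1, -wordMatrix w 0 1, by linear_combination hdet⟩
  rw [Int.isCoprime_iff_gcd_eq_one] at hcol hfrac
  exact ⟨hcol, hfrac, Rat.den_div_eq_of_coprime hpos hfrac⟩
end
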